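/- arXiv:0904.1158 — 2 statements merged into one kernel-verified Lean document; each statement's English description precedes it below -/
import Mathlib

section
/- Let D be the cell set of a skew shifted Young diagram with n cells and let T_0 be a standard tableau of shape D with content sequence i_0. Then the map sending a standard tableau T of shape D to its content sequence is a bijection from the set of all standard tableaux of shape D onto the equivalence class {j ∈ ℕ^n : j ∼ i_0} under admissible transpositions. In particular, the number of standard tableaux of shape D equals the cardinality of the equivalence class of i_0. -/
/-- A strict partition: a strictly decreasing list of positive integers. -/
def StrictPartition (l : List ℕ) : Prop :=
  l.Chain' (· > ·) ∧ ∀ x ∈ l, 0 < x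

/-- The shifted Young diagram of a strict partition (0-indexed):
row `r` consists of the cells `(r, j)` with `r ≤ j < r + λ_r`. -/
def shiftedCells (l : List ℕ) : Set (ℕ × ℕ) :=
  {p : ℕ × ℕ | p.1 ≤ p.2 ∧ p.2 < p.1 + l.getD p.1 0}

/-- `D` is the cell set of a skew shifted Young diagram. -/
def IsSkewShifted (D : Set (ℕ × ℕ)) : Prop :=
  ∃ lam mu : List ℕ, StrictPartition lam ∧ StrictPartition mu ∧
    (∀ r, mu.getD r 0 ≤ lam.getD r 0) ∧ D = shiftedCells lam \ shiftedCells mu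

/-- A standard tableau of shape `D` with `n` cells: a bijection from `{1,…,n}`
(i.e. `Fin n`) onto `D` whose labels increase along rows and down columns. -/
def IsStandard {n : ℕ} (D : Set (ℕ × ℕ)) (T : Fin n → ℕ × ℕ) : Prop :=
  Function.Injective T ∧ Set.range T = D ∧
  (∀ k l : Fin n, (T l).1 = (T k).1 → (T l).2 = (T k).2 + 1 → k < l) ∧
  (∀ k l : Fin n, (T l).1 = (T k).1 + 1 → (T l).2 = (T k).2 → k < l)

/-- The content sequence of a tableau: the content `j − r` of the cell labeled `k`. -/
def contentSeq {n : ℕ} (T : Fin n → ℕ × ℕ) : Fin n → ℕ := fun k => (T k).2 - (T k).1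

/-- A tuple `i ∈ ℕ^n` is splittable if whenever `i k = i l` with `k < l`:
if the common value is `0` then `1` occurs strictly between, and if it is `≥ 1`
then both the value minus one and the value plus one occur strictly between. -/
def Splittable {n : ℕ} (i : Fin n → ℕ) : Prop :=
  ∀ k l : Fin n, k < l → i k = i l →
    (i k = 0 → ∃ a, k < a ∧ a < l ∧ i a = 1) ∧
    (1 ≤ i k → (∃ a, k < a ∧ a < l ∧ i a + 1 = i k) ∧ (∃ a, k < a ∧ a < l ∧ i a = i k + 1))

/-- `j` is obtained from `i` by one admissible simple transposition. -/
def AdmissibleSwap {n : ℕ} (i j : Fin n → ℕ) : Prop :=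
  ∃ (k : ℕ) (hk : k + 1 < n),
    i ⟨k, Nat.lt_of_succ_lt hk⟩ ≠ i ⟨k + 1, hk⟩ + 1 ∧
    i ⟨k + 1, hk⟩ ≠ i ⟨k, Nat.lt_of_succ_lt hk⟩ + 1 ∧
    j = i ∘ Equiv.swap ⟨k, Nat.lt_of_succ_lt hk⟩ ⟨k + 1, hk⟩

/-- Equivalence of tuples under finite chains of admissible transpositions. -/
def EquivTuples {n : ℕ} (i j : Fin n → ℕ) : Prop :=
  Relation.ReflTransGen AdmissibleSwap i j

theorem sp_step {l : List ℕ} (hl : StrictPartition l) (r : ℕ) (h : 0 < l.getD (r+1) 0) :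
    l.getD (r+1) 0 < l.getD r 0 := by
  have hr : r + 1 < l.length := by
    by_contra hc
    rw [List.getD_eq_default _ _ (by omega)] at h
    omega
  have h1 := (List.isChain_iff_getElem.1 hl.1) r hr
  rw [List.getD_eq_getElem _ _ hr, List.getD_eq_getElem _ _ (by omega)]
  exact h1

theorem shifted_lower {l : List ℕ} (hl : StrictPartition l) (d : ℕ) :
    ∀ r j r' j' : ℕ, r' = r + d → r ≤ j → j ≤ j' → (r', j') ∈ shiftedCells l →
      (r, j) ∈ shiftedCells l := by
  induction d with
  | zero =>
    intro r j r' j' h1 h2 h3 h4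
    simp only [shiftedCells, Set.mem_ofPred_eq] at *
    subst h1
    omega
  | succ d ih =>
    intro r j r' j' h1 h2 h3 h4
    refine ih r j (r + d) j' rfl h2 h3 ?_
    simp only [shiftedCells, Set.mem_ofPred_eq] at *
    subst h1
    rw [← Nat.add_assoc] at h4
    have := sp_step hl (r + d) (by omega)
    omega

theorem skew_le {D : Set (ℕ × ℕ)} (hD : IsSkewShifted D) {p : ℕ × ℕ} (hp : p ∈ D) :
    p.1 ≤ p.2 := by
  obtain ⟨lam, mu, -, -, -, rfl⟩ := hD
  exact hp.1.1

theorem skew_convex {D : Set (ℕ × ℕ)} (hD : IsSkewShifted D) {a b c : ℕ × ℕ}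
    (ha : a ∈ D) (hc : c ∈ D) (hab : a ≤ b) (hbc : b ≤ c) (hb : b.1 ≤ b.2) : b ∈ D := by
  have ha' := skew_le hD ha
  obtain ⟨lam, mu, hl, hm, -, rfl⟩ := hD
  obtain ⟨a1, a2⟩ := a
  obtain ⟨b1, b2⟩ := b
  obtain ⟨c1, c2⟩ := c
  obtain ⟨h1, h2⟩ := Prod.mk_le_mk.1 hab
  obtain ⟨h3, h4⟩ := Prod.mk_le_mk.1 hbc
  refine ⟨shifted_lower hl (c1 - b1) _ _ _ _ (by omega) hb h4 hc.1, fun h => ha.2 ?_⟩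
  exact shifted_lower hm (b1 - a1) _ _ _ _ (by omega) ha' h2 h

theorem std_row {n : ℕ} {D : Set (ℕ × ℕ)} (hD : IsSkewShifted D) {T : Fin n → ℕ × ℕ}
    (hT : IsStandard D T) (d : ℕ) :
    ∀ k l : Fin n, (T l).1 = (T k).1 → (T l).2 = (T k).2 + d → k ≤ l := by
  induction d with
  | zero =>
    intro k l h1 h2
    exact (hT.1 (Prod.ext h1 h2)).ge
  | succ d ih =>
    intro k l h1 h2
    have hk : T k ∈ D := hT.2.1 ▸ Set.mem_range_self k
    have hl : T l ∈ D := hT.2.1 ▸ Set.mem_range_self l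
    have := skew_le hD hk
    have hm : ((T k).1, (T k).2 + d) ∈ D :=
      skew_convex hD hk hl ⟨le_rfl, by simp⟩ ⟨by simp [h1], by simp [h2]⟩ (by simp; omega)
    rw [← hT.2.1] at hm
    obtain ⟨m, hm⟩ := hm
    have e1 := ih k m (by rw [hm]) (by rw [hm])
    have e2 := hT.2.2.1 m l (by rw [hm]; exact h1) (by rw [hm]; simp; omega)
    exact e1.trans e2.le

theorem std_col {n : ℕ} {D : Set (ℕ × ℕ)} (hD : IsSkewShifted D) {T : Fin n → ℕ × ℕ}
    (hT : IsStandard D T) (d : ℕ) :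
    ∀ k l : Fin n, (T l).1 = (T k).1 + d → (T l).2 = (T k).2 → k ≤ l := by
  induction d with
  | zero =>
    intro k l h1 h2
    exact (hT.1 (Prod.ext h1 h2)).ge
  | succ d ih =>
    intro k l h1 h2
    have hk : T k ∈ D := hT.2.1 ▸ Set.mem_range_self k
    have hl : T l ∈ D := hT.2.1 ▸ Set.mem_range_self l
    have := skew_le hD hl
    have hm : ((T k).1 + d, (T k).2) ∈ D :=
      skew_convex hD hk hl ⟨by simp, le_rfl⟩ ⟨by simp [h1], by simp [h2]⟩ (by simp; omega)
    rw [← hT.2.1] at hm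
    obtain ⟨m, hm⟩ := hm
    have e1 := ih k m (by rw [hm]) (by rw [hm])
    have e2 := hT.2.2.2 m l (by rw [hm]; simp; omega) (by rw [hm]; exact h2)
    exact e1.trans e2.le

theorem std_mono {n : ℕ} {D : Set (ℕ × ℕ)} (hD : IsSkewShifted D) {T : Fin n → ℕ × ℕ}
    (hT : IsStandard D T) {k l : Fin n} (h : T k ≤ T l) : k ≤ l := by
  have hk : T k ∈ D := hT.2.1 ▸ Set.mem_range_self k
  have hl : T l ∈ D := hT.2.1 ▸ Set.mem_range_self l
  have h3 := skew_le hD hl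
  obtain ⟨h1, h2⟩ := h
  have hm : ((T k).1, (T l).2) ∈ D :=
    skew_convex hD hk hl ⟨le_rfl, h2⟩ ⟨h1, le_rfl⟩ (h1.trans h3)
  rw [← hT.2.1] at hm
  obtain ⟨m, hm⟩ := hm
  have e1 := std_row hD hT ((T l).2 - (T k).2) k m (by rw [hm]) (by rw [hm]; simp; omega)
  have e2 := std_col hD hT ((T l).1 - (T k).1) m l (by rw [hm]; simp; omega) (by rw [hm])
  exact e1.trans e2

theorem cmp_of_content {p q : ℕ × ℕ} (hp : p.1 ≤ p.2) (hq : q.1 ≤ q.2)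
    (h1 : p.2 - p.1 ≤ q.2 - q.1 + 1) (h2 : q.2 - q.1 ≤ p.2 - p.1 + 1) : p ≤ q ∨ q ≤ p := by
  simp only [Prod.le_def]
  omega

theorem std_inj {n : ℕ} {D : Set (ℕ × ℕ)} (hD : IsSkewShifted D) {T T' : Fin n → ℕ × ℕ}
    (hT : IsStandard D T) (hT' : IsStandard D T') (h : contentSeq T = contentSeq T') :
    T = T' := by
  funext k
  induction k using WellFoundedLT.induction with
  | ind k ih =>
    have hk : T k ∈ D := hT.2.1 ▸ Set.mem_range_self k
    have hk' : T' k ∈ D := hT'.2.1 ▸ Set.mem_range_self k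
    have hc : (T k).2 - (T k).1 = (T' k).2 - (T' k).1 := congrFun h k
    rcases cmp_of_content (skew_le hD hk) (skew_le hD hk') (by omega) (by omega) with hle | hle
    · have hk2 := hk
      rw [← hT'.2.1] at hk2
      obtain ⟨l, hl⟩ := hk2
      have h1 : l ≤ k := std_mono hD hT' (hl ▸ hle)
      rcases h1.lt_or_eq with h2 | h2
      · have := hT.1 ((ih l h2).trans hl)
        exact absurd this h2.ne
      · rw [← hl, h2]
    · have hk2 := hk'
      rw [← hT.2.1] at hk2
      obtain ⟨l, hl⟩ := hk2
      have h1 : l ≤ k := std_mono hD hT (hl ▸ hle)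
      rcases h1.lt_or_eq with h2 | h2
      · have := hT'.1 ((ih l h2).symm.trans hl)
        exact absurd this h2.ne
      · rw [← hl, h2]

theorem swap_lt {n : ℕ} (k : ℕ) (hk : k + 1 < n) (a b : Fin n)
    (h : Equiv.swap (⟨k, Nat.lt_of_succ_lt hk⟩ : Fin n) ⟨k + 1, hk⟩ a <
      Equiv.swap (⟨k, Nat.lt_of_succ_lt hk⟩ : Fin n) ⟨k + 1, hk⟩ b) :
    a < b ∨ (Equiv.swap (⟨k, Nat.lt_of_succ_lt hk⟩ : Fin n) ⟨k + 1, hk⟩ a = ⟨k, Nat.lt_of_succ_lt hk⟩ ∧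
      Equiv.swap (⟨k, Nat.lt_of_succ_lt hk⟩ : Fin n) ⟨k + 1, hk⟩ b = ⟨k + 1, hk⟩) := by
  simp only [Equiv.swap_apply_def, Fin.ext_iff, Fin.lt_def] at *
  split_ifs at * <;> simp_all <;> omega

theorem std_swap {n : ℕ} {D : Set (ℕ × ℕ)} (hD : IsSkewShifted D) {T : Fin n → ℕ × ℕ}
    (hT : IsStandard D T) (k : ℕ) (hk : k + 1 < n)
    (h2 : contentSeq T ⟨k + 1, hk⟩ ≠ contentSeq T ⟨k, Nat.lt_of_succ_lt hk⟩ + 1)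
    (h1 : contentSeq T ⟨k, Nat.lt_of_succ_lt hk⟩ ≠ contentSeq T ⟨k + 1, hk⟩ + 1) :
    IsStandard D (T ∘ Equiv.swap ⟨k, Nat.lt_of_succ_lt hk⟩ ⟨k + 1, hk⟩) := by
  have m1 : T ⟨k, Nat.lt_of_succ_lt hk⟩ ∈ D := hT.2.1 ▸ Set.mem_range_self _
  have m2 : T ⟨k + 1, hk⟩ ∈ D := hT.2.1 ▸ Set.mem_range_self _
  have m1 := skew_le hD m1
  have m2 := skew_le hD m2
  simp only [contentSeq] at h1 h2
  refine ⟨hT.1.comp (Equiv.injective _), ?_, ?_, ?_⟩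
  · rw [(Equiv.surjective _).range_comp]
    exact hT.2.1
  · intro a b e1 e2
    simp only [Function.comp_apply] at e1 e2
    rcases swap_lt k hk a b (hT.2.2.1 _ _ e1 e2) with h | ⟨h, h'⟩
    · exact h
    · rw [h, h'] at e1 e2
      omega
  · intro a b e1 e2
    simp only [Function.comp_apply] at e1 e2
    rcases swap_lt k hk a b (hT.2.2.2 _ _ e1 e2) with h | ⟨h, h'⟩
    · exact h
    · rw [h, h'] at e1 e2
      omega

theorem std_connect {n : ℕ} {D : Set (ℕ × ℕ)} (hD : IsSkewShifted D) {T : Fin n → ℕ × ℕ}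
    (hT : IsStandard D T) (s : Lex (Fin n → Fin n)) :
    Function.Injective (ofLex s) → IsStandard D (T ∘ ofLex s) →
      EquivTuples (contentSeq T) (contentSeq (T ∘ ofLex s)) := by
  induction s using WellFoundedLT.induction with
  | ind s ih =>
    intro hs hS
    by_cases hm : ∀ (k : ℕ) (hk : k + 1 < n),
        ofLex s ⟨k, Nat.lt_of_succ_lt hk⟩ < ofLex s ⟨k + 1, hk⟩
    · have hmono : StrictMono (ofLex s) := by
        cases n with
        | zero => intro a; exact a.elim0
        | succ n =>
          rw [Fin.strictMono_iff_lt_succ]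
          intro i
          exact hm i (by omega)
      have : ofLex s = id := by
        refine (StrictMono.range_inj hmono strictMono_id).1 ?_
        rw [(Finite.injective_iff_surjective.1 hs).range_eq, Set.range_id]
      rw [this]
      exact Relation.ReflTransGen.refl
    · push Not at hm
      obtain ⟨k, hk, hle⟩ := hm
      have hne : ofLex s ⟨k + 1, hk⟩ ≠ ofLex s ⟨k, Nat.lt_of_succ_lt hk⟩ := by
        intro h
        have := hs h
        simp at this
      have hlt := lt_of_le_of_ne hle hne
      have m1 : (T ∘ ofLex s) ⟨k, Nat.lt_of_succ_lt hk⟩ ∈ D := hS.2.1 ▸ Set.mem_range_self _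
      have m2 : (T ∘ ofLex s) ⟨k + 1, hk⟩ ∈ D := hS.2.1 ▸ Set.mem_range_self _
      have m1 := skew_le hD m1
      have m2 := skew_le hD m2
      have hinc : ¬ ((T ∘ ofLex s) ⟨k, Nat.lt_of_succ_lt hk⟩ ≤ (T ∘ ofLex s) ⟨k + 1, hk⟩ ∨
          (T ∘ ofLex s) ⟨k + 1, hk⟩ ≤ (T ∘ ofLex s) ⟨k, Nat.lt_of_succ_lt hk⟩) := by
        rintro (h | h)
        · exact absurd (std_mono hD hT h) (not_le.2 hlt)
        · have := std_mono hD hS h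
          simp at this
      have c1 : contentSeq (T ∘ ofLex s) ⟨k + 1, hk⟩ ≠
          contentSeq (T ∘ ofLex s) ⟨k, Nat.lt_of_succ_lt hk⟩ + 1 := by
        intro h
        simp only [contentSeq] at h
        exact hinc (cmp_of_content m1 m2 (by omega) (by omega))
      have c2 : contentSeq (T ∘ ofLex s) ⟨k, Nat.lt_of_succ_lt hk⟩ ≠
          contentSeq (T ∘ ofLex s) ⟨k + 1, hk⟩ + 1 := by
        intro h
        simp only [contentSeq] at h
        exact hinc (cmp_of_content m1 m2 (by omega) (by omega))
      have hdesc : toLex (ofLex s ∘ Equiv.swap ⟨k, Nat.lt_of_succ_lt hk⟩ ⟨k + 1, hk⟩) < s :=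
        Pi.lex_desc (by simp [Fin.le_def]) hlt
      have := ih _ hdesc (hs.comp (Equiv.injective _)) (std_swap hD hS k hk c1 c2)
      refine Relation.ReflTransGen.tail this ⟨k, hk, ?_, ?_, ?_⟩
      · simpa [contentSeq] using c1
      · simpa [contentSeq] using c2
      · funext x
        simp [contentSeq]

/-- the content-sequence map is a bijection from the set of
standard tableaux of a fixed skew shifted shape onto the equivalence class
(under admissible transpositions) of the content sequence of any one of them;
in particular the number of standard tableaux equals the cardinality of that
equivalence class. -/
theorem content_seq_bijOn_equiv_class (n : ℕ) (D : Set (ℕ × ℕ))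
    (hD : IsSkewShifted D) (T₀ : Fin n → ℕ × ℕ) (hT₀ : IsStandard D T₀) :
    Set.BijOn contentSeq {T : Fin n → ℕ × ℕ | IsStandard D T}
      {j : Fin n → ℕ | EquivTuples (contentSeq T₀) j} ∧
    Nat.card {T : Fin n → ℕ × ℕ // IsStandard D T} =
      Nat.card {j : Fin n → ℕ // EquivTuples (contentSeq T₀) j} := by
  have hB : Set.BijOn contentSeq {T : Fin n → ℕ × ℕ | IsStandard D T}
      {j : Fin n → ℕ | EquivTuples (contentSeq T₀) j} := by
    refine ⟨?_, ?_, ?_⟩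
    · intro T hT
      have hT : IsStandard D T := hT
      have hex : ∀ k, ∃ l, T₀ l = T k := by
        intro k
        have : T k ∈ D := hT.2.1 ▸ Set.mem_range_self k
        rw [← hT₀.2.1] at this
        exact this
      choose s hs using hex
      have hc : T₀ ∘ s = T := funext hs
      have hi : Function.Injective s := by
        intro a b hab
        apply hT.1
        rw [← hs a, ← hs b, hab]
      have := std_connect hD hT₀ (toLex s) hi (by simpa [hc] using hT)
      simpa [hc] using this
    · intro T hT T' hT' h
      exact std_inj hD hT hT' h
    · intro j hj
      have hj : Relation.ReflTransGen AdmissibleSwap (contentSeq T₀) j := hj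
      rename_i hj0
      clear hj0
      induction hj with
      | refl => exact ⟨T₀, hT₀, rfl⟩
      | tail _ hab ih =>
        obtain ⟨T, hT, rfl⟩ := ih
        obtain ⟨k, hk, h1, h2, rfl⟩ := hab
        exact ⟨_, std_swap hD hT k hk h2 h1, rfl⟩
  exact ⟨hB, Nat.card_congr (Set.BijOn.equiv _ hB)⟩
end

section
/- The map sending a pair (λ, T), where λ is a strict partition of n and T is a standard tableau of shape the shifted Young diagram S(λ), to the content sequence of T, is a bijection onto the set of tuples i ∈ ℕ^n that are splittable, satisfy i_1 = 0, and satisfy for each 2 ≤ k ≤ n that either i_k + 1 ∈ {i_1,…,i_{k−1}} or (i_k ≥ 1 and i_k − 1 ∈ {i_1,…,i_{k−1}}). -/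
lemma cnt_succ (f : ℕ → ℕ) (c j : ℕ) :
    Nat.count (fun a => f a = c) (j+1) = Nat.count (fun a => f a = c) j + if f j = c then 1 else 0 :=
  Nat.count_succ _ _

lemma cnt_mono (f : ℕ → ℕ) (c : ℕ) {a b : ℕ} (h : a ≤ b) :
    Nat.count (fun a => f a = c) a ≤ Nat.count (fun a => f a = c) b :=
  Nat.count_monotone _ h

lemma cnt_last (f : ℕ → ℕ) (c k r : ℕ) (h : r < Nat.count (fun a => f a = c) k) :
    ∃ l < k, f l = c ∧ Nat.count (fun a => f a = c) l = r := by
  induction k with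
  | zero => simp at h
  | succ k ih =>
    by_cases h' : r < Nat.count (fun a => f a = c) k
    · obtain ⟨l, hl, h1, h2⟩ := ih h'
      exact ⟨l, by omega, h1, h2⟩
    · rw [cnt_succ] at h
      split_ifs at h with hc
      · exact ⟨k, by omega, hc, by omega⟩
      · omega

lemma cnt_lt_of (f : ℕ → ℕ) (c a k l : ℕ) (h1 : k ≤ a) (h2 : a < l) (h : f a = c) :
    Nat.count (fun a => f a = c) k < Nat.count (fun a => f a = c) l := by
  have e1 := cnt_mono f c h1
  have e2 := cnt_mono f c (show a + 1 ≤ l from h2)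
  rw [cnt_succ, if_pos h] at e2
  omega

lemma cnt_inv (f : ℕ → ℕ) (n : ℕ)
    (hs1 : ∀ k l, k < l → l < n → f k = f l → 1 ≤ f k → ∃ a, k < a ∧ a < l ∧ f a + 1 = f k)
    (hs2 : ∀ k l, k < l → l < n → f k = f l → ∃ a, k < a ∧ a < l ∧ f a = f k + 1)
    (h0 : 0 < n → f 0 = 0)
    (hn : ∀ k, 1 ≤ k → k < n → (∃ a < k, f a = f k + 1) ∨ (∃ a < k, f a + 1 = f k)) :
    ∀ j ≤ n, ∀ c, Nat.count (fun a => f a = c + 1) j ≤ Nat.count (fun a => f a = c) j ∧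
      Nat.count (fun a => f a = c) j ≤ Nat.count (fun a => f a = c + 1) j + 1 := by
  intro j
  induction j using Nat.strong_induction_on with
  | _ j ih =>
  intro hj c
  rcases j with _ | k
  · simp
  obtain ⟨i1, i2⟩ := ih k (by omega) (by omega) c
  rw [cnt_succ, cnt_succ]
  by_cases hc : f k = c
  · have hne : f k ≠ c + 1 := by omega
    rw [if_pos hc, if_neg hne]
    refine ⟨by omega, ?_⟩
    rcases Nat.eq_zero_or_pos (Nat.count (fun a => f a = c) k) with hz | hp
    · omega
    obtain ⟨l, hl, h1, h2⟩ := cnt_last f c k _ (Nat.sub_lt hp one_pos)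
    obtain ⟨a, ha1, ha2, ha3⟩ := hs2 l k hl (by omega) (by omega)
    have := cnt_lt_of f (c+1) a (l+1) k ha1 ha2 (by omega)
    have i3 := (ih (l+1) (by omega) (by omega) c).2
    have e := cnt_succ f c l
    rw [if_pos h1] at e
    omega
  · rw [if_neg hc]
    by_cases hc1 : f k = c + 1
    · rw [if_pos hc1]
      refine ⟨?_, by omega⟩
      rcases Nat.eq_zero_or_pos (Nat.count (fun a => f a = c + 1) k) with hz | hp
      · have hk : 1 ≤ k := by
          rcases k with _ | k
          · have := h0 (by omega); omega
          · omega
        have hpos : 0 < Nat.count (fun a => f a = c) k := by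
          rcases hn k hk (by omega) with ⟨a, ha, e⟩ | ⟨a, ha, e⟩
          · have := cnt_lt_of f (c+2) a 0 k (by omega) ha (by omega)
            have h7 : Nat.count (fun a => f a = c + 2) k ≤ Nat.count (fun a => f a = c + 1) k :=
              (ih k (by omega) (by omega) (c+1)).1
            omega
          · have := cnt_lt_of f c a 0 k (by omega) ha (by omega)
            simpa using this
        omega
      obtain ⟨l, hl, h1, h2⟩ := cnt_last f (c+1) k _ (Nat.sub_lt hp one_pos)
      obtain ⟨a, ha1, ha2, ha3⟩ := hs1 l k hl (by omega) (by omega) (by omega)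
      have := cnt_lt_of f c a (l+1) k ha1 ha2 (by omega)
      have i3 := (ih (l+1) (by omega) (by omega) c).1
      have e := cnt_succ f (c+1) l
      rw [if_pos h1] at e
      omega
    · rw [if_neg hc1]
      omega

lemma sp_getD {l : List ℕ} (h : StrictPartition l) (r : ℕ) (hr : 0 < l.getD (r+1) 0) :
    l.getD (r+1) 0 < l.getD r 0 := by
  have hlt : r + 1 < l.length := by
    by_contra hc
    rw [List.getD_eq_default _ _ (by omega)] at hr
    omega
  have h1 := List.isChain_iff_getElem.1 h.1 r hlt
  rw [List.getD_eq_getElem _ _ hlt, List.getD_eq_getElem _ _ (by omega : r < l.length)]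
  exact h1

lemma cells_left {l : List ℕ} {r c : ℕ} (h : (r, r + (c + 1)) ∈ shiftedCells l) :
    (r, r + c) ∈ shiftedCells l := by
  simp only [shiftedCells, Set.mem_setOf_eq] at *
  omega

lemma cells_up {l : List ℕ} (hl : StrictPartition l) {r c : ℕ}
    (h : (r + 1, r + 1 + c) ∈ shiftedCells l) :
    (r, r + (c + 1)) ∈ shiftedCells l := by
  simp only [shiftedCells, Set.mem_setOf_eq] at *
  have := sp_getD hl r (by omega)
  omega

lemma cells_form {l : List ℕ} {p : ℕ × ℕ} (h : p ∈ shiftedCells l) :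
    p = (p.1, p.1 + (p.2 - p.1)) := by
  simp only [shiftedCells, Set.mem_setOf_eq] at h
  ext <;> simp
  omega

section tab
variable {n : ℕ} {l : List ℕ} {T : Fin n → ℕ × ℕ}

lemma tab_form (hT : IsStandard (shiftedCells l) T) (k : Fin n) :
    T k = ((T k).1, (T k).1 + contentSeq T k) :=
  cells_form (by rw [← hT.2.1]; exact ⟨k, rfl⟩)

lemma tab_mem (hT : IsStandard (shiftedCells l) T) (k : Fin n) : T k ∈ shiftedCells l := by
  rw [← hT.2.1]; exact ⟨k, rfl⟩

lemma tab_content (a : Fin n) {r c : ℕ} (h : T a = (r, r + c)) : contentSeq T a = c := by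
  simp [contentSeq, h]

lemma tab_left (hT : IsStandard (shiftedCells l) T) {k : Fin n} {r c : ℕ}
    (h : T k = (r, r + (c + 1))) : ∃ a, a < k ∧ T a = (r, r + c) := by
  have h1 : (r, r + c) ∈ Set.range T := by
    rw [hT.2.1]; apply cells_left; rw [← h]; exact tab_mem hT k
  obtain ⟨a, ha⟩ := h1
  exact ⟨a, hT.2.2.1 a k (by simp [h, ha]) (by simp [h, ha]; omega), ha⟩

lemma tab_up (hl : StrictPartition l) (hT : IsStandard (shiftedCells l) T) {k : Fin n} {r c : ℕ}
    (h : T k = (r + 1, r + 1 + c)) : ∃ a, a < k ∧ T a = (r, r + (c + 1)) := by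
  have h1 : (r, r + (c + 1)) ∈ Set.range T := by
    rw [hT.2.1]; apply cells_up hl; rw [← h]; exact tab_mem hT k
  obtain ⟨a, ha⟩ := h1
  exact ⟨a, hT.2.2.2 a k (by simp [h, ha]) (by simp [h, ha]; omega), ha⟩

lemma tab_diag (hl : StrictPartition l) (hT : IsStandard (shiftedCells l) T) {k : Fin n}
    {r s c : ℕ} (h : T k = (s, s + c)) (hrs : r < s) : ∃ a, a < k ∧ T a = (r, r + c) := by
  induction s generalizing k with
  | zero => omega
  | succ s ih =>
    obtain ⟨a, ha, e⟩ := tab_up hl hT h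
    obtain ⟨b, hb, e2⟩ := tab_left hT e
    rcases Nat.lt_or_ge r s with h3 | h3
    · obtain ⟨d, hd, e3⟩ := ih e2 h3
      exact ⟨d, by omega, e3⟩
    · have : r = s := by omega
      subst this
      exact ⟨b, by omega, e2⟩

lemma tab_lt (hl : StrictPartition l) (hT : IsStandard (shiftedCells l) T) {k m : Fin n}
    {r s c : ℕ} (hk : T k = (r, r + c)) (hm : T m = (s, s + c)) (h : k < m) : r < s := by
  by_contra hc
  rcases Nat.lt_or_ge s r with h3 | h3
  · obtain ⟨a, ha, e⟩ := tab_diag hl hT hk h3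
    have : a = m := hT.1 (by rw [e, hm])
    omega
  · have : r = s := by omega
    subst this
    have : k = m := hT.1 (by rw [hk, hm])
    omega

lemma tab_zero (hl : StrictPartition l) (hT : IsStandard (shiftedCells l) T) {k : Fin n}
    (hk : k.val = 0) : T k = (0, 0) := by
  have h := tab_form hT k
  generalize (T k).1 = r at h
  generalize contentSeq T k = c at h
  rcases c with _ | c
  · rcases r with _ | r
    · simpa using h
    · obtain ⟨a, ha, -⟩ := tab_up hl hT h
      omega
  · obtain ⟨a, ha, -⟩ := tab_left hT h
    omega

lemma tab_split (hl : StrictPartition l) (hT : IsStandard (shiftedCells l) T) :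
    Splittable (contentSeq T) := by
  intro k m hkm he
  have hk := tab_form hT k
  have hm := tab_form hT m
  rw [← he] at hm
  generalize (T k).1 = r at hk
  generalize (T m).1 = s at hm
  generalize contentSeq T k = c at *
  have hrs := tab_lt hl hT hk hm hkm
  -- the cell (r+1, r+1+c)
  have h1 : ∃ b, b ≤ m ∧ T b = (r + 1, r + 1 + c) := by
    rcases Nat.lt_or_ge (r+1) s with h3 | h3
    · obtain ⟨b, hb, e⟩ := tab_diag hl hT hm h3
      exact ⟨b, by omega, e⟩
    · have : s = r + 1 := by omega
      subst this
      exact ⟨m, le_rfl, hm⟩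
  obtain ⟨b, hb, e⟩ := h1
  obtain ⟨a, ha, ea⟩ := tab_up hl hT e
  have hka : k < a := hT.2.2.1 k a (by simp [hk, ea]) (by simp [hk, ea]; omega)
  have hR : ∃ a, k < a ∧ a < m ∧ contentSeq T a = c + 1 :=
    ⟨a, hka, by omega, tab_content a ea⟩
  refine ⟨fun h0 => by simpa [h0] using hR, fun h1 => ⟨?_, hR⟩⟩
  obtain ⟨c, rfl⟩ : ∃ d, c = d + 1 := ⟨c - 1, by omega⟩
  obtain ⟨d, hd, ed⟩ := tab_left hT e
  refine ⟨d, hT.2.2.2 k d (by simp [hk, ed]) (by simp [hk, ed]; omega), by omega, ?_⟩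
  rw [tab_content d ed]

lemma tab_nbr (hl : StrictPartition l) (hT : IsStandard (shiftedCells l) T) (k : Fin n)
    (hk1 : 1 ≤ k.val) : (∃ a, a < k ∧ contentSeq T a = contentSeq T k + 1) ∨
      (1 ≤ contentSeq T k ∧ ∃ a, a < k ∧ contentSeq T a + 1 = contentSeq T k) := by
  have hk := tab_form hT k
  generalize (T k).1 = r at hk
  generalize contentSeq T k = c at *
  rcases c with _ | c
  · left
    rcases r with _ | r
    · have h0 := tab_zero hl hT (k := ⟨0, by omega⟩) rfl
      have := hT.1 (hk.trans (by simpa using h0.symm))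
      rw [this] at hk1
      simp at hk1
    · obtain ⟨a, ha, e⟩ := tab_up hl hT hk
      exact ⟨a, ha, tab_content a e⟩
  · right
    obtain ⟨a, ha, e⟩ := tab_left hT hk
    exact ⟨by omega, a, ha, by rw [tab_content a e]⟩

lemma tab_inj {l' : List ℕ} {T' : Fin n → ℕ × ℕ}
    (hl : StrictPartition l) (hT : IsStandard (shiftedCells l) T)
    (hl' : StrictPartition l') (hT' : IsStandard (shiftedCells l') T')
    (h : contentSeq T = contentSeq T') : T = T' := by
  funext k
  induction k using WellFoundedLT.induction with
  | _ k ih =>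
  have e := tab_form hT k
  have e' := tab_form hT' k
  rw [← h] at e'
  rcases lt_trichotomy (T k).1 (T' k).1 with h1 | h1 | h1
  · obtain ⟨a, ha, ea⟩ := tab_diag hl' hT' e' h1
    have := hT.1 ((ih a ha).trans (ea.trans e.symm))
    omega
  · rw [e, e', h1]
  · obtain ⟨a, ha, ea⟩ := tab_diag hl hT e h1
    have := hT'.1 ((ih a ha).symm.trans (ea.trans e'.symm))
    omega

end tab

lemma cells_inj {l l' : List ℕ} (hl : StrictPartition l) (hl' : StrictPartition l')
    (h : shiftedCells l = shiftedCells l') : l = l' := by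
  have key : ∀ r, l.getD r 0 = l'.getD r 0 := by
    intro r
    have h1 : ∀ c, c < l.getD r 0 ↔ c < l'.getD r 0 := by
      intro c
      have := Set.ext_iff.1 h (r, r + c)
      simpa [shiftedCells] using this
    have a1 := h1 (l.getD r 0)
    have a2 := h1 (l'.getD r 0)
    omega
  have pos : ∀ {l : List ℕ}, StrictPartition l → ∀ r, r < l.length ↔ 0 < l.getD r 0 := by
    intro l hl r
    constructor
    · intro hr
      rw [List.getD_eq_getElem _ _ hr]
      exact hl.2 _ (List.getElem_mem hr)
    · intro hr
      by_contra hc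
      rw [List.getD_eq_default _ _ (by omega)] at hr
      omega
  have hlen : l.length = l'.length := by
    have h1 : ∀ r, r < l.length ↔ r < l'.length := fun r => by rw [pos hl, pos hl', key]
    have a1 := h1 l.length
    have a2 := h1 l'.length
    omega
  apply List.ext_getElem hlen
  intro r h1 h2
  have := key r
  rwa [List.getD_eq_getElem _ _ h1, List.getD_eq_getElem _ _ h2] at this

lemma tab_sum {n : ℕ} {g : ℕ → ℕ} {N : ℕ} {T : Fin n → ℕ × ℕ}
    (hT : IsStandard (shiftedCells ((List.range N).map g)) T) :
    ((List.range N).map g).sum = n := by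
  have hget : ∀ r < N, ((List.range N).map g).getD r 0 = g r := by
    intro r hr
    rw [List.getD_eq_getElem _ _ (by simpa using hr)]; simp
  have hfst : ∀ k, (T k).1 < N := by
    intro k
    have := tab_mem hT k
    simp only [shiftedCells, Set.mem_setOf_eq] at this
    by_contra hc
    rw [List.getD_eq_default _ _ (by simpa using hc)] at this
    omega
  have h1 : n = ∑ r ∈ Finset.range N, (Finset.univ.filter (fun k : Fin n => (T k).1 = r)).card := by
    rw [← Finset.card_eq_sum_card_fiberwise (f := fun k => (T k).1)]
    · simp
    · intro k _
      simpa using hfst k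
  have h2 : ((List.range N).map g).sum = ∑ r ∈ Finset.range N, g r := by
    simp [Finset.sum]
    rfl
  rw [h2]
  conv_rhs => rw [h1]
  apply Finset.sum_congr rfl
  intro r hr
  have hr' : r < N := by simpa using hr
  rw [← Finset.card_range (g r)]
  symm
  apply Finset.card_bij (fun k _ => contentSeq T k)
  · intro k hk
    have hk' : (T k).1 = r := by simpa using hk
    have := tab_mem hT k
    simp only [shiftedCells, Set.mem_setOf_eq] at this
    rw [hk', hget r hr'] at this
    simp only [Finset.mem_range, contentSeq]
    omega
  · intro a ha b hb e
    have ha' : (T a).1 = r := by simpa using ha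
    have hb' : (T b).1 = r := by simpa using hb
    apply hT.1
    rw [tab_form hT a, tab_form hT b, ha', hb', e]
  · intro c hc
    have hc' : c < g r := by simpa using hc
    have : (r, r + c) ∈ Set.range T := by
      rw [hT.2.1]
      simp only [shiftedCells, Set.mem_setOf_eq]
      rw [hget r hr']
      omega
    obtain ⟨a, ha⟩ := this
    exact ⟨a, by simp [ha], tab_content a ha⟩

lemma tab_exists {n : ℕ} (i : Fin n → ℕ) (hs : Splittable i)
    (h0 : ∀ k : Fin n, k.val = 0 → i k = 0)
    (hn : ∀ k : Fin n, 1 ≤ k.val →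
          (∃ a, a < k ∧ i a = i k + 1) ∨ (1 ≤ i k ∧ ∃ a, a < k ∧ i a + 1 = i k)) :
    ∃ (l : List ℕ) (T : Fin n → ℕ × ℕ), StrictPartition l ∧ l.sum = n ∧
      IsStandard (shiftedCells l) T ∧ contentSeq T = i := by
  obtain ⟨f, hf⟩ : ∃ f : ℕ → ℕ, ∀ k : Fin n, f k.val = i k :=
    ⟨fun j => if h : j < n then i ⟨j, h⟩ else 0, fun k => by simp⟩
  have inv := cnt_inv f n
    (by
      intro k l hkl hl he h1
      have e1 := hf ⟨k, by omega⟩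
      have e2 := hf ⟨l, hl⟩
      simp only at e1 e2
      obtain ⟨a, h2, h3, h4⟩ := ((hs ⟨k, by omega⟩ ⟨l, hl⟩ hkl (by rw [← e1, ← e2, he])).2
        (by omega)).1
      exact ⟨a, h2, h3, by rw [hf, h4, e1]⟩)
    (by
      intro k l hkl hl he
      have e1 := hf ⟨k, by omega⟩
      have e2 := hf ⟨l, hl⟩
      simp only at e1 e2
      obtain ⟨h5, h6⟩ := hs ⟨k, by omega⟩ ⟨l, hl⟩ hkl (by rw [← e1, ← e2, he])
      rcases Nat.eq_zero_or_pos (f k) with hz | hp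
      · obtain ⟨a, h2, h3, h4⟩ := h5 (by omega)
        exact ⟨a, h2, h3, by rw [hf, h4, hz]⟩
      · obtain ⟨a, h2, h3, h4⟩ := (h6 (by omega)).2
        exact ⟨a, h2, h3, by rw [hf, h4, e1]⟩)
    (by
      intro h
      have e1 := hf ⟨0, h⟩
      rw [h0 _ rfl] at e1
      exact e1)
    (by
      intro k hk hkn
      have e1 := hf ⟨k, hkn⟩
      simp only at e1
      rcases hn ⟨k, hkn⟩ hk with ⟨a, h1, h2⟩ | ⟨-, a, h1, h2⟩
      · exact Or.inl ⟨a, h1, by rw [hf, h2, e1]⟩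
      · exact Or.inr ⟨a, h1, by rw [hf, h2, e1]⟩)
  obtain ⟨cnt, hcnt⟩ : ∃ cnt : ℕ → ℕ → ℕ, ∀ c j, cnt c j = Nat.count (fun a => f a = c) j :=
    ⟨_, fun _ _ => rfl⟩
  have inv' : ∀ j ≤ n, ∀ c, cnt (c+1) j ≤ cnt c j ∧ cnt c j ≤ cnt (c+1) j + 1 := by
    intro j hj c
    simpa only [hcnt] using inv j hj c
  have mono : ∀ c a b, a ≤ b → cnt c a ≤ cnt c b := by
    intro c a b h
    simpa only [hcnt] using cnt_mono f c h
  have succ : ∀ k : Fin n, cnt (i k) (k.val + 1) = cnt (i k) k.val + 1 := by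
    intro k
    rw [hcnt, hcnt, cnt_succ, if_pos (hf k)]
  have anti : Antitone (fun c => cnt c n) := antitone_nat_of_succ_le fun c => (inv' n le_rfl c).1
  have ex : ∀ r, ∃ c, cnt c n ≤ r := by
    intro r
    obtain ⟨B, hB⟩ : ∃ B, ∀ k, i k < B :=
      ⟨Finset.univ.sup i + 1, fun k => Nat.lt_succ_of_le (Finset.le_sup (Finset.mem_univ k))⟩
    refine ⟨B, ?_⟩
    by_contra hc
    rw [hcnt] at hc
    obtain ⟨l, hl, e, -⟩ := cnt_last f B n r (by omega)
    have := hf ⟨l, hl⟩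
    have := hB ⟨l, hl⟩
    simp only at *
    omega
  classical
  obtain ⟨g, hg⟩ : ∃ g : ℕ → ℕ, ∀ r c, c < g r ↔ r < cnt c n := by
    refine ⟨fun r => Nat.find (ex r), fun r c => ?_⟩
    constructor
    · intro h
      have := Nat.find_min (ex r) h
      omega
    · intro h
      by_contra hc
      have h1 := anti (not_lt.1 hc)
      have := Nat.find_spec (ex r)
      simp only at h1
      omega
  have hget : ∀ r, ((List.range (cnt 0 n)).map g).getD r 0 = g r := by
    intro r
    by_cases hr : r < cnt 0 n
    · rw [List.getD_eq_getElem _ _ (by simpa using hr)]; simp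
    · rw [List.getD_eq_default _ _ (by simpa using hr)]
      have := hg r 0
      omega
  have hcells : ∀ r c, (r, r + c) ∈ shiftedCells ((List.range (cnt 0 n)).map g) ↔ r < cnt c n := by
    intro r c
    rw [← hg]
    simp only [shiftedCells, Set.mem_setOf_eq, hget]
    omega
  obtain ⟨T, hTd⟩ : ∃ T : Fin n → ℕ × ℕ, ∀ k, T k = (cnt (i k) k.val, cnt (i k) k.val + i k) :=
    ⟨_, fun _ => rfl⟩
  have hcont : contentSeq T = i := by
    funext k
    exact tab_content k (hTd k)
  have hT : IsStandard (shiftedCells ((List.range (cnt 0 n)).map g)) T := by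
    refine ⟨?_, ?_, ?_, ?_⟩
    · intro a b hab
      have hi : i a = i b := by rw [← hcont]; simp [contentSeq, hab]
      rw [hTd, hTd, hi] at hab
      have h1 : cnt (i b) a.val = cnt (i b) b.val := (Prod.mk.inj hab).1
      have s1 := succ a
      have s2 := succ b
      rw [hi] at s1
      rcases lt_trichotomy a b with h | h | h
      · have := mono (i b) (a.val+1) b.val h
        omega
      · exact h
      · have := mono (i b) (b.val+1) a.val h
        omega
    · ext p
      constructor
      · rintro ⟨k, rfl⟩
        rw [hTd, hcells]
        have := mono (i k) (k.val+1) n k.2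
        have := succ k
        omega
      · intro hp
        have hpe := cells_form hp
        generalize p.1 = r, p.2 - p.1 = c at hpe
        subst hpe
        rw [hcells, hcnt] at hp
        obtain ⟨k, hk, e1, e2⟩ := cnt_last f _ n _ hp
        refine ⟨⟨k, hk⟩, ?_⟩
        have e3 := hf ⟨k, hk⟩
        simp only at e3
        rw [hTd, ← e3, e1, hcnt, e2]
    · intro k l h1 h2
      rw [hTd, hTd] at h1 h2
      simp only at h1 h2
      have hi : i l = i k + 1 := by omega
      by_contra hc
      have hlk : l < k := by
        rcases lt_or_eq_of_le (not_lt.1 hc) with h | h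
        · exact h
        · rw [h] at hi; omega
      have s := succ l
      have i1 := (inv' (l.val+1) l.2 (i k)).1
      rw [← hi] at i1
      have := mono (i k) (l.val+1) k.val hlk
      omega
    · intro k l h1 h2
      rw [hTd, hTd] at h1 h2
      simp only at h1 h2
      have hi : i k = i l + 1 := by omega
      by_contra hc
      have hlk : l < k := by
        rcases lt_or_eq_of_le (not_lt.1 hc) with h | h
        · exact h
        · rw [h] at hi; omega
      have s := succ l
      have i1 := (inv' (l.val+1) l.2 (i l)).2
      rw [← hi] at i1
      have := mono (i k) (l.val+1) k.val hlk
      omega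
  refine ⟨_, T, ⟨?_, ?_⟩, tab_sum hT, hT, hcont⟩
  · apply List.isChain_iff_getElem.2
    intro r hr
    simp only [List.getElem_map, List.getElem_range]
    have hr' : r + 1 < cnt 0 n := by simpa using hr
    have h1 := (hg (r+1) 0).2 hr'
    have h2 := (hg (r+1) (g (r+1) - 1)).1 (by omega)
    have h3 := (inv' n le_rfl (g (r+1) - 1)).2
    have h4 : g (r+1) - 1 + 1 = g (r+1) := by omega
    rw [h4] at h3
    exact (hg r (g (r+1))).2 (by omega)
  · intro x hx
    simp only [List.mem_map, List.mem_range] at hx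
    obtain ⟨r, hr, rfl⟩ := hx
    exact (hg r 0).2 hr

/-- pairs of a strict partition of `n` together with a standard
tableau of its shifted shape are in bijection, via the content sequence, with
splittable tuples `i ∈ ℕ^n` with `i 0 = 0` such that every later entry has a
neighbor (value `± 1`) among the earlier entries. -/
theorem shifted_tableau_content_bijection (n : ℕ) :
    Set.BijOn (fun q : List ℕ × (Fin n → ℕ × ℕ) => contentSeq q.2)
      {q : List ℕ × (Fin n → ℕ × ℕ) |
        StrictPartition q.1 ∧ q.1.sum = n ∧ IsStandard (shiftedCells q.1) q.2}
      {i : Fin n → ℕ | Splittable i ∧ (∀ k : Fin n, k.val = 0 → i k = 0) ∧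
        ∀ k : Fin n, 1 ≤ k.val →
          (∃ a, a < k ∧ i a = i k + 1) ∨ (1 ≤ i k ∧ ∃ a, a < k ∧ i a + 1 = i k)} := by
  refine ⟨?_, ?_, ?_⟩
  · rintro ⟨l, T⟩ ⟨hl, -, hT⟩
    refine ⟨tab_split hl hT, ?_, tab_nbr hl hT⟩
    intro k hk
    have := tab_zero hl hT hk
    simp only at this
    simp [contentSeq, this]
  · rintro ⟨l, T⟩ ⟨hl, -, hT⟩ ⟨l', T'⟩ ⟨hl', -, hT'⟩ h
    have h1 : T = T' := tab_inj hl hT hl' hT' h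
    subst h1
    have h2 : l = l' := cells_inj hl hl' (hT.2.1.symm.trans hT'.2.1)
    rw [h2]
  · rintro i ⟨hs, h0, hn⟩
    obtain ⟨l, T, h1, h2, h3, h4⟩ := tab_exists i hs h0 hn
    exact ⟨(l, T), ⟨h1, h2, h3⟩, h4⟩
end
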